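/- Let f be a real continuous 2π-periodic function and n ≥ 0. A trigonometric polynomial p ∈ 𝒫_n is the best supremum-norm approximant to f from 𝒫_n if and only if the error curve f − p equioscillates on [0,2π): there exist at least 2n+2 points 0 ≤ x_1 < x_2 < … < x_{2n+2} < 2π at which |f(x_i) − p(x_i)| = ‖f − p‖_∞ with alternating signs, i.e., (f − p)(x_{i+1}) = −(f − p)(x_i) for all i. -/

import Mathlib

open Real

/-- `p` is a real trigonometric polynomial of degree at most `n`, i.e. a function of
the form `Σ_{k=0}^n a_k cos(kt) + Σ_{k=1}^n b_k sin(kt)` with real coefficients. -/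
def IsRealTrigPoly (n : ℕ) (p : ℝ → ℝ) : Prop :=
  ∃ a b : ℕ → ℝ, ∀ t : ℝ,
    p t = (∑ k ∈ Finset.range (n + 1), a k * Real.cos (k * t)) +
      ∑ k ∈ Finset.Icc 1 n, b k * Real.sin (k * t)

/-- The supremum norm of `g` over `[0, 2π]`. -/
noncomputable def supNormOn (g : ℝ → ℝ) : ℝ :=
  ⨆ t : Set.Icc (0 : ℝ) (2 * π), |g t|

/-!
Let `e = f - p`. If `0` is not a convex combination of the vectors `e(t) • (φ₀(t), …, φ₂ₙ(t))`,
where `t` runs over the extremal points `|e(t)| = ‖e‖` and the `φₖ` form the trigonometric basis,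
then a separating hyperplane is a polynomial with the sign of `e` at every extremal point, and
moving `p` slightly along it lowers the error. So for a best approximant Carathéodory's theorem
gives an annihilator of `𝒫_n` carried by at most `2n + 2` extremal points, weighted with the signs
of `e`.

The coefficients of a nonzero annihilator on `2n + 2` points of `[0, 2π)` alternate strictly in
sign: the product of the half-angle sines `sin ((t - xⱼ) / 2)` over all but two adjacent points is
a polynomial of degree `n` with values of the same sign at these two points. Hence `e`
equioscillates.

Conversely, any `2n + 2` points carry a nonzero annihilator by counting dimensions. Its signs match
those of an equioscillating `e` up to a global factor, so that it bounds `‖e - q‖` below by `‖e‖`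
for all `q ∈ 𝒫_n`.
-/

lemma isCompact_convexHull_of_finiteDimensional {E : Type*} [AddCommGroup E] [Module ℝ E]
    [TopologicalSpace E] [ContinuousAdd E] [ContinuousSMul ℝ E] [FiniteDimensional ℝ E] {s : Set E}
    (hs : IsCompact s) : IsCompact (convexHull ℝ s) := by
  let combination (k : ℕ) (wz : (Fin k → ℝ) × (Fin k → E)) : E := ∑ i, wz.1 i • wz.2 i
  let simplices (k : ℕ) : Set ((Fin k → ℝ) × (Fin k → E)) :=
    stdSimplex ℝ (Fin k) ×ˢ Set.univ.pi fun _ => s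
  have hull_eq : convexHull ℝ s =
      ⋃ k ∈ Set.Iic (Module.finrank ℝ E + 1), combination k '' simplices k := by
    refine Set.Subset.antisymm (fun y hy => ?_) (Set.iUnion₂_subset fun k _ => ?_)
    · obtain ⟨ι, _, z, w, hz, hind, hw, hw1, rfl⟩ := eq_pos_convex_span_of_mem_convexHull hy
      let σ := (Fintype.equivFin ι).symm
      have hcard : Fintype.card ι ≤ Module.finrank ℝ E + 1 :=
        hind.card_le_finrank_succ.trans (Nat.succ_le_succ (Submodule.finrank_le _))
      refine Set.mem_biUnion hcard ⟨(w ∘ σ, z ∘ σ), ⟨⟨fun i => (hw _).le, ?_⟩, ?_⟩, ?_⟩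
      · exact (σ.sum_comp w).trans hw1
      · exact fun i _ => hz ⟨σ i, rfl⟩
      · exact σ.sum_comp fun i => w i • z i
    · rintro _ ⟨⟨w, z⟩, ⟨⟨hw, hw1⟩, hz⟩, rfl⟩
      exact (convex_convexHull ℝ s).sum_mem (fun i _ => hw i) hw1
        fun i _ => subset_convexHull ℝ s (hz i (Set.mem_univ i))
  rw [hull_eq]
  refine (Set.finite_Iic _).isCompact_biUnion fun k _ => IsCompact.image ?_ (by fun_prop)
  exact (isCompact_stdSimplex ℝ (Fin k)).prod (isCompact_univ_pi fun _ => hs)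

lemma exists_finsupp_of_mem_convexHull_image {𝕜 α E : Type*} [Field 𝕜] [LinearOrder 𝕜]
    [IsStrictOrderedRing 𝕜] [AddCommGroup E] [Module 𝕜 E] [FiniteDimensional 𝕜 E] {Ψ : α → E}
    {s : Set α} {y : E} (hy : y ∈ convexHull 𝕜 (Ψ '' s)) :
    ∃ w : α →₀ 𝕜, ↑w.support ⊆ s ∧ w.support.card ≤ Module.finrank 𝕜 E + 1 ∧ 0 ≤ w ∧
      (w.sum fun _ c => c) = 1 ∧ (w.sum fun t c => c • Ψ t) = y := by
  obtain ⟨ι, _, z, w, hz, hind, hw, hw1, hwz⟩ := eq_pos_convex_span_of_mem_convexHull hy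
  choose τ hτs hτz using fun i => hz ⟨i, rfl⟩
  have hτ : Function.Injective τ := fun i j hij => hind.injective (by rw [← hτz, ← hτz, hij])
  let v : ι →₀ 𝕜 := Finsupp.equivFunOnFinite.symm w
  refine ⟨v.embDomain ⟨τ, hτ⟩, ?_, ?_, ?_, ?_, ?_⟩
  · simpa [Set.subset_def] using fun i _ => hτs i
  · rw [Finsupp.support_embDomain, Finset.card_map]
    exact (Finset.card_le_univ _).trans
      (hind.card_le_finrank_succ.trans (Nat.succ_le_succ (Submodule.finrank_le _)))
  · intro t
    by_cases ht : t ∈ Set.range τ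
    · obtain ⟨i, rfl⟩ := ht
      exact (hw i).le.trans_eq (Finsupp.embDomain_apply_self ⟨τ, hτ⟩ v i).symm
    · exact (Finsupp.embDomain_of_notMem_range ⟨τ, hτ⟩ v t ht).ge
  · rw [Finsupp.sum_embDomain, Finsupp.sum_fintype _ _ fun _ => rfl]
    exact hw1
  · rw [Finsupp.sum_embDomain, Finsupp.sum_fintype _ _ fun i => zero_smul 𝕜 (Ψ (τ i)), ← hwz]
    exact Finset.sum_congr rfl fun i _ => congrArg (w i • ·) (hτz i)

lemma exists_orderEmbedding_fin_of_finset_subset {α : Type*} [LinearOrder α] {A : Set α}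
    (hA : A.Infinite) {S : Finset α} (hS : ↑S ⊆ A) {m : ℕ} (hm : S.card ≤ m) :
    ∃ x : Fin m ↪o α, (∀ i, x i ∈ A) ∧ S ⊆ Finset.univ.map x.toEmbedding := by
  obtain ⟨R, hR, hRm⟩ := (hA.sdiff S.finite_toSet).exists_subset_card_eq (m - S.card)
  have disj : Disjoint S R := Finset.disjoint_left.2 fun a haS haR => (hR haR).2 haS
  have hT : (S.disjUnion R disj).card = m := by
    rw [Finset.card_disjUnion, hRm, Nat.add_sub_cancel' hm]
  refine ⟨(S.disjUnion R disj).orderEmbOfFin hT, fun i => ?_, ?_⟩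
  · exact (Finset.mem_disjUnion.1 (Finset.orderEmbOfFin_mem _ hT i)).elim (hS ·) (hR · |>.1)
  · rw [Finset.map_orderEmbOfFin_univ]
    exact fun a ha => Finset.mem_disjUnion.2 (Or.inl ha)

lemma exists_orderEmbedding_fin_of_mem_convexHull_image {𝕜 α E : Type*} [Field 𝕜] [LinearOrder 𝕜]
    [IsStrictOrderedRing 𝕜] [AddCommGroup E] [Module 𝕜 E] [FiniteDimensional 𝕜 E] [LinearOrder α]
    {Ψ : α → E} {A s : Set α} {y : E} {m : ℕ} (hA : A.Infinite) (hs : s ⊆ A)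
    (hm : Module.finrank 𝕜 E + 1 ≤ m) (hy : y ∈ convexHull 𝕜 (Ψ '' s)) :
    ∃ (x : Fin m ↪o α) (w : Fin m → 𝕜), (∀ i, x i ∈ A) ∧ (∀ i, 0 ≤ w i) ∧ ∑ i, w i = 1 ∧
      (∀ i, w i ≠ 0 → x i ∈ s) ∧ ∑ i, w i • Ψ (x i) = y := by
  obtain ⟨w, hws, hcard, hw0, hw1, hwy⟩ := exists_finsupp_of_mem_convexHull_image hy
  obtain ⟨x, hxA, hwx⟩ :=
    exists_orderEmbedding_fin_of_finset_subset hA (hws.trans hs) (hcard.trans hm)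
  refine ⟨x, w ∘ x, hxA, fun i => hw0 (x i), ?_, ?_, ?_⟩
  · rw [← hw1, Finsupp.sum_of_support_subset w hwx _ fun _ _ => rfl, Finset.sum_map]
    rfl
  · exact fun i hi => hws (Finset.mem_coe.2 (Finsupp.mem_support_iff.2 hi))
  · rw [← hwy, Finsupp.sum_of_support_subset w hwx _ fun t _ => zero_smul 𝕜 (Ψ t),
      Finset.sum_map]
    rfl

lemma eq_of_forall_succ_eq_castSucc {α : Type*} {m : ℕ} {g : Fin (m + 1) → α}
    (h : ∀ i : Fin m, g i.succ = g i.castSucc) (i j : Fin (m + 1)) : g i = g j := by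
  have eq_zero (i : Fin (m + 1)) : g i = g 0 := by
    induction i using Fin.induction with
    | zero => rfl
    | succ i ih => exact (h i).trans ih
  rw [eq_zero i, eq_zero j]

section ChebyshevNorm

variable {K : Type*} [TopologicalSpace K] [CompactSpace K]

lemma exists_norm_sub_smul_lt [Nonempty K] {e r : C(K, ℝ)}
    (h : ∀ t, |e t| = ‖e‖ → 0 < e t * r t) : ∃ ε : ℝ, ‖e - ε • r‖ < ‖e‖ := by
  have pos_max (t : K) : 0 < max (‖e‖ - |e t|) (e t * r t) := by
    rcases (e.norm_coe_le_norm t).lt_or_eq with ht | ht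
    · exact lt_max_of_lt_left (sub_pos.2 ht)
    · exact lt_max_of_lt_right (h t ht)
  -- By compactness `δ` bounds from below, at every `t`, the slack or the rate of descent.
  obtain ⟨δ, hδ, le_max⟩ := isCompact_univ.exists_forall_le'
    (f := fun t => max (‖e‖ - |e t|) (e t * r t)) (by fun_prop) fun t _ => pos_max t
  set M := ‖r‖
  have hM : 0 ≤ M := norm_nonneg r
  obtain ⟨ε, hε, hεM, hεM2⟩ : ∃ ε > 0, ε * M < δ ∧ ε * M ^ 2 < δ := by
    refine ⟨δ / (M ^ 2 + M + 1), by positivity, ?_, ?_⟩ <;>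
    · rw [div_mul_eq_mul_div, div_lt_iff₀ (by positivity)]
      nlinarith [mul_nonneg hδ.le hM, mul_nonneg hδ.le (sq_nonneg M)]
  refine ⟨ε, (ContinuousMap.norm_lt_iff_of_nonempty _).2 fun t => ?_⟩
  have he : |e t| ≤ ‖e‖ := e.norm_coe_le_norm t
  have hr : |r t| ≤ M := r.norm_coe_le_norm t
  change |e t - ε * r t| < ‖e‖
  rcases le_max_iff.1 (le_max t (Set.mem_univ t)) with hδt | hδt
  · calc |e t - ε * r t| ≤ |e t| + ε * |r t| := by
          simpa only [abs_mul, abs_of_pos hε] using abs_sub (e t) (ε * r t)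
      _ ≤ |e t| + ε * M := by gcongr
      _ < ‖e‖ := by linarith
  · refine abs_lt_of_sq_lt_sq ?_ (norm_nonneg e)
    calc (e t - ε * r t) ^ 2 = |e t| ^ 2 - ε * (2 * (e t * r t) - ε * |r t| ^ 2) := by
          rw [sq_abs, sq_abs]; ring
      _ ≤ ‖e‖ ^ 2 - ε * (2 * δ - ε * M ^ 2) := by gcongr
      _ < ‖e‖ ^ 2 := sub_lt_self _ (mul_pos hε (by linarith))

theorem zero_mem_convexHull_of_forall_norm_le [Nonempty K] {κ : Type*} [Fintype κ] {e : C(K, ℝ)}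
    {φ : κ → C(K, ℝ)} (h : ∀ a : κ → ℝ, ‖e‖ ≤ ‖e - ∑ k, a k • φ k‖) :
    (0 : κ → ℝ) ∈ convexHull ℝ ((fun t k => e t * φ k t) '' {t | |e t| = ‖e‖}) := by
  classical
  by_contra zero_notMem
  have hull_compact : IsCompact
      (convexHull ℝ ((fun t k => e t * φ k t) '' {t | |e t| = ‖e‖})) := by
    refine isCompact_convexHull_of_finiteDimensional (IsCompact.image ?_ (by fun_prop))
    exact (isClosed_eq (by fun_prop) continuous_const).isCompact
  obtain ⟨L, u, hu, hL⟩ := geometric_hahn_banach_point_closed (convex_convexHull ℝ _)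
    hull_compact.isClosed zero_notMem
  rw [map_zero] at hu
  let a (k : κ) : ℝ := L fun j => if k = j then 1 else 0
  have hLa (t : K) : L (fun k => e t * φ k t) = e t * (∑ k, a k • φ k) t := by
    simpa [a, Finset.mul_sum, mul_assoc, mul_comm] using
      L.toLinearMap.pi_apply_eq_sum_univ fun k => e t * φ k t
  obtain ⟨ε, hε⟩ := exists_norm_sub_smul_lt (e := e) (r := ∑ k, a k • φ k) fun t ht =>
    hu.trans ((hL _ (subset_convexHull ℝ _ ⟨t, ht, rfl⟩)).trans_eq (hLa t))
  refine (h (ε • a)).not_gt ?_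
  simpa only [Finset.smul_sum, smul_smul, Pi.smul_apply, smul_eq_mul] using hε

lemma norm_le_norm_sub_of_annihilator {ι : Type*} [Fintype ι] {e q : C(K, ℝ)} {x : ι → K}
    {c : ι → ℝ} (hc : c ≠ 0) (hq : ∑ i, c i * q (x i) = 0)
    (he : |∑ i, c i * e (x i)| = (∑ i, |c i|) * ‖e‖) : ‖e‖ ≤ ‖e - q‖ := by
  obtain ⟨i₀, hi₀⟩ := Function.ne_iff.1 hc
  have hpos : 0 < ∑ i, |c i| :=
    Finset.sum_pos' (fun i _ => abs_nonneg _) ⟨i₀, Finset.mem_univ _, abs_pos.2 hi₀⟩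
  refine le_of_mul_le_mul_left ?_ hpos
  calc (∑ i, |c i|) * ‖e‖ = |∑ i, c i * (e - q) (x i)| := by
        simp only [ContinuousMap.sub_apply, mul_sub, Finset.sum_sub_distrib, hq, sub_zero, he]
    _ ≤ ∑ i, |c i| * |(e - q) (x i)| := by
        simpa only [abs_mul] using Finset.abs_sum_le_sum_abs (fun i => c i * (e - q) (x i)) _
    _ ≤ (∑ i, |c i|) * ‖e - q‖ := by
        rw [Finset.sum_mul]
        gcongr with i
        exact (e - q).norm_coe_le_norm (x i)

end ChebyshevNorm

/-- The standard basis `cos (k t)`, `0 ≤ k ≤ n`, and `sin (k t)`, `1 ≤ k ≤ n`, of `𝒫_n`; the index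
`k : Fin n` of a sine stands for the frequency `k + 1`. -/
noncomputable def trigBasis (n : ℕ) : Fin (n + 1) ⊕ Fin n → ℝ → ℝ :=
  Sum.elim (fun k t => Real.cos (k * t)) (fun k t => Real.sin ((k + 1 : ℕ) * t))

/-- The space `𝒫_n` of real trigonometric polynomials of degree at most `n`, as a linear subspace of
all real functions. -/
noncomputable def trigPoly (n : ℕ) : Submodule ℝ (ℝ → ℝ) :=
  Submodule.span ℝ (Set.range (trigBasis n))

lemma isRealTrigPoly_iff_mem_trigPoly {n : ℕ} {p : ℝ → ℝ} :
    IsRealTrigPoly n p ↔ p ∈ trigPoly n := by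
  have sum_Icc (g : ℕ → ℝ) : ∑ k ∈ Finset.Icc 1 n, g k = ∑ k : Fin n, g (k + 1) := by
    rw [Fin.sum_univ_eq_sum_range fun k => g (k + 1), Finset.range_eq_Ico,
      Finset.sum_Ico_add' g 0 n 1, zero_add, Finset.Ico_add_one_right_eq_Icc]
  simp only [trigPoly, Submodule.mem_span_range_iff_exists_fun, Fintype.sum_sum_type,
    IsRealTrigPoly, Finset.sum_range, sum_Icc]
  constructor
  · rintro ⟨a, b, h⟩
    refine ⟨Sum.elim (fun k => a k) (fun k => b (k + 1)), funext fun t => ?_⟩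
    simp [h, trigBasis]
  · rintro ⟨c, rfl⟩
    refine ⟨Function.extend Fin.val (c ∘ Sum.inl) 0,
      fun k => Function.extend Fin.val (c ∘ Sum.inr) 0 (k - 1), fun t => ?_⟩
    simp [trigBasis, Fin.val_injective.extend_apply]

lemma continuous_trigBasis (n : ℕ) (i : Fin (n + 1) ⊕ Fin n) : Continuous (trigBasis n i) := by
  rcases i with k | k <;> simp only [trigBasis, Sum.elim_inl, Sum.elim_inr] <;> fun_prop

lemma periodic_trigBasis (n : ℕ) (i : Fin (n + 1) ⊕ Fin n) :
    Function.Periodic (trigBasis n i) (2 * π) := by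
  intro t
  rcases i with k | k <;> simp only [trigBasis, Sum.elim_inl, Sum.elim_inr, mul_add,
    Real.cos_add_nat_mul_two_pi, Real.sin_add_nat_mul_two_pi]

lemma trigBasis_eq_cos (n : ℕ) (i : Fin (n + 1) ⊕ Fin n) :
    ∃ (k : ℤ) (s : ℝ), |k| ≤ n ∧ trigBasis n i = fun t => Real.cos (k * t + s) := by
  rcases i with k | k
  · exact ⟨k, 0, by rw [Nat.abs_cast]; omega, by simp [trigBasis]⟩
  · refine ⟨(k + 1 : ℕ), -(π / 2), by rw [Nat.abs_cast]; omega, funext fun t => ?_⟩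
    rw [← sub_eq_add_neg, Real.cos_sub_pi_div_two]
    simp [trigBasis]

lemma cos_add_mem_trigPoly {n : ℕ} {k : ℤ} (hk : |k| ≤ n) (s : ℝ) :
    (fun t => Real.cos (k * t + s)) ∈ trigPoly n := by
  have cos_mem {m : ℕ} (hm : m ≤ n) : (fun t => Real.cos (m * t)) ∈ trigPoly n :=
    Submodule.subset_span ⟨Sum.inl ⟨m, Nat.lt_succ_of_le hm⟩, rfl⟩
  have sin_mem {m : ℕ} (hm : m ≤ n) : (fun t => Real.sin (m * t)) ∈ trigPoly n := by
    rcases m with - | m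
    · convert (trigPoly n).zero_mem with t
      simp
    · exact Submodule.subset_span ⟨Sum.inr ⟨m, hm⟩, rfl⟩
  have nat_case {m : ℕ} (hm : m ≤ n) (r : ℝ) :
      (fun t => Real.cos (m * t + r)) ∈ trigPoly n := by
    convert (trigPoly n).sub_mem ((trigPoly n).smul_mem (Real.cos r) (cos_mem hm))
      ((trigPoly n).smul_mem (Real.sin r) (sin_mem hm)) using 1
    funext t
    simp only [Pi.sub_apply, Pi.smul_apply, smul_eq_mul, Real.cos_add]
    ring
  obtain ⟨m, rfl | rfl⟩ := k.eq_nat_or_neg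
  · exact_mod_cast nat_case (by simpa using hk) s
  · convert nat_case (m := m) (by simpa using hk) (-s) using 2 with t
    rw [← Real.cos_neg]
    push_cast
    ring_nf

lemma mul_mem_trigPoly {m n : ℕ} {p q : ℝ → ℝ} (hp : p ∈ trigPoly m) (hq : q ∈ trigPoly n) :
    p * q ∈ trigPoly (m + n) := by
  suffices trigPoly m * trigPoly n ≤ trigPoly (m + n) from this (Submodule.mul_mem_mul hp hq)
  rw [trigPoly, trigPoly, Submodule.span_mul_span, Submodule.span_le]
  rintro _ ⟨_, ⟨i, rfl⟩, _, ⟨j, rfl⟩, rfl⟩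
  obtain ⟨k, r, hk, hi⟩ := trigBasis_eq_cos m i
  obtain ⟨l, s, hl, hj⟩ := trigBasis_eq_cos n j
  have hadd : |k + l| ≤ (m + n : ℕ) := by push_cast; linarith [abs_add_le k l]
  have hsub : |k - l| ≤ (m + n : ℕ) := by push_cast; linarith [abs_sub k l]
  change trigBasis m i * trigBasis n j ∈ trigPoly (m + n)
  convert (trigPoly (m + n)).smul_mem (1 / 2) ((trigPoly (m + n)).add_mem
    (cos_add_mem_trigPoly hadd (r + s)) (cos_add_mem_trigPoly hsub (r - s))) using 1
  funext t
  have hadd_arg : ((k + l : ℤ) : ℝ) * t + (r + s) = (k * t + r) + (l * t + s) := by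
    push_cast; ring
  have hsub_arg : ((k - l : ℤ) : ℝ) * t + (r - s) = (k * t + r) - (l * t + s) := by
    push_cast; ring
  simp only [hi, hj, Pi.mul_apply, Pi.smul_apply, Pi.add_apply, smul_eq_mul, hadd_arg, hsub_arg,
    Real.cos_add (k * t + r), Real.cos_sub (k * t + r)]
  ring

lemma sin_half_mul_sin_half_mem_trigPoly (a b : ℝ) :
    (fun t => Real.sin ((t - a) / 2) * Real.sin ((t - b) / 2)) ∈ trigPoly 1 := by
  have h0 := cos_add_mem_trigPoly (n := 1) (k := 0) (by simp) ((a - b) / 2)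
  have h1 := cos_add_mem_trigPoly (n := 1) (k := 1) (by simp) (-((a + b) / 2))
  convert (trigPoly 1).smul_mem (1 / 2) ((trigPoly 1).sub_mem h0 h1) using 1
  funext t
  have hsum : ((1 : ℤ) : ℝ) * t + -((a + b) / 2) = (t - a) / 2 + (t - b) / 2 := by
    push_cast; ring
  have hdiff : ((0 : ℤ) : ℝ) * t + (a - b) / 2 = (t - b) / 2 - (t - a) / 2 := by
    push_cast; ring
  change _ = 1 / 2 * (Real.cos _ - Real.cos _)
  rw [hsum, hdiff, Real.cos_add, Real.cos_sub]
  ring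

lemma prod_sin_half_mem_trigPoly {n : ℕ} {ι : Type*} {S : Finset ι} (w : ι → ℝ)
    (hS : S.card = 2 * n) : (fun t => ∏ j ∈ S, Real.sin ((t - w j) / 2)) ∈ trigPoly n := by
  classical
  induction n generalizing S with
  | zero =>
    obtain rfl : S = ∅ := Finset.card_eq_zero.1 hS
    simpa using cos_add_mem_trigPoly (n := 0) (k := 0) (by simp) 0
  | succ n ih =>
    obtain ⟨a, S', ha, rfl, hS'⟩ := Finset.card_eq_succ.1 (show S.card = 2 * n + 1 + 1 from hS)
    obtain ⟨b, S'', hb, rfl, hS''⟩ := Finset.card_eq_succ.1 hS'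
    convert mul_mem_trigPoly (ih hS'') (sin_half_mul_sin_half_mem_trigPoly (w a) (w b)) using 1
    funext t
    rw [Finset.prod_insert ha, Finset.prod_insert hb, Pi.mul_apply, ← mul_assoc, mul_comm]

lemma sin_mul_sin_pos {a b : ℝ} (ha : |a| < π) (hb : |b| < π) (hab : 0 < a * b) :
    0 < Real.sin a * Real.sin b := by
  rw [abs_lt] at ha hb
  rcases mul_pos_iff.1 hab with ⟨ha0, hb0⟩ | ⟨ha0, hb0⟩
  · exact mul_pos (Real.sin_pos_of_pos_of_lt_pi ha0 ha.2) (Real.sin_pos_of_pos_of_lt_pi hb0 hb.2)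
  · exact mul_pos_of_neg_of_neg (Real.sin_neg_of_neg_of_neg_pi_lt ha0 ha.1)
      (Real.sin_neg_of_neg_of_neg_pi_lt hb0 hb.1)

section Annihilators

variable {n : ℕ} {x : Fin (2 * n + 2) → ℝ}

lemma exists_trigPoly_vanishing_off_adjacent (hx : StrictMono x)
    (hxI : ∀ i, x i ∈ Set.Ico (0 : ℝ) (2 * π)) (i : Fin (2 * n + 1)) :
    ∃ q ∈ trigPoly n, (∀ j, j ≠ i.castSucc → j ≠ i.succ → q (x j) = 0) ∧
      0 < q (x i.castSucc) * q (x i.succ) := by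
  set S : Finset (Fin (2 * n + 2)) := {i.castSucc, i.succ}ᶜ with hS
  have mem_S {j} : j ∈ S ↔ j ≠ i.castSucc ∧ j ≠ i.succ := by simp [hS]
  have hcard : S.card = 2 * n := by
    rw [hS, Finset.card_compl, Finset.card_pair Fin.castSucc_lt_succ.ne, Fintype.card_fin,
      Nat.add_sub_cancel]
  refine ⟨_, prod_sin_half_mem_trigPoly x hcard, fun j hj hj' => ?_, ?_⟩
  · exact Finset.prod_eq_zero (mem_S.2 ⟨hj, hj'⟩) (by simp)
  have abs_half_lt (k j) : |(x k - x j) / 2| < π := by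
    obtain ⟨hk0, hk⟩ := hxI k
    obtain ⟨hj0, hj⟩ := hxI j
    rw [abs_lt]
    constructor <;> linarith
  simp only [← Finset.prod_mul_distrib]
  refine Finset.prod_pos fun j hj => sin_mul_sin_pos (abs_half_lt _ j) (abs_half_lt _ j) ?_
  have outside : j < i.castSucc ∨ i.succ < j := by
    have := mem_S.1 hj
    simp only [ne_eq, Fin.ext_iff, Fin.lt_def, Fin.val_castSucc, Fin.val_succ] at this ⊢
    omega
  have hlt : x i.castSucc < x i.succ := hx Fin.castSucc_lt_succ
  rcases outside with hj | hj
  · have := hx hj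
    exact mul_pos (by linarith) (by linarith)
  · have := hx hj
    exact mul_pos_of_neg_of_neg (by linarith) (by linarith)

lemma sign_succ_of_annihilator (hx : StrictMono x) (hxI : ∀ i, x i ∈ Set.Ico (0 : ℝ) (2 * π))
    {c : Fin (2 * n + 2) → ℝ} (hc : ∀ q ∈ trigPoly n, ∑ i, c i * q (x i) = 0)
    (i : Fin (2 * n + 1)) : SignType.sign (c i.succ) = -SignType.sign (c i.castSucc) := by
  obtain ⟨q, hq, hq0, hpos⟩ := exists_trigPoly_vanishing_off_adjacent hx hxI i
  have two_terms : c i.castSucc * q (x i.castSucc) + c i.succ * q (x i.succ) = 0 := by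
    rw [← hc q hq]
    refine (Fintype.sum_eq_add (f := fun j => c j * q (x j)) _ _ Fin.castSucc_lt_succ.ne
      fun j hj => ?_).symm
    rw [hq0 j hj.1 hj.2, mul_zero]
  have sq_pos : 0 < q (x i.castSucc) * q (x i.castSucc) :=
    mul_self_pos.2 (left_ne_zero_of_mul hpos.ne')
  calc SignType.sign (c i.succ)
      = SignType.sign (c i.succ * (q (x i.castSucc) * q (x i.succ))) := by
        rw [sign_mul, sign_pos hpos, mul_one]
    _ = SignType.sign (-(c i.castSucc * (q (x i.castSucc) * q (x i.castSucc)))) := by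
        congr 1; linear_combination q (x i.castSucc) * two_terms
    _ = -SignType.sign (c i.castSucc) := by
        rw [Left.sign_neg, sign_mul, sign_pos sq_pos, mul_one]

lemma ne_zero_of_annihilator (hx : StrictMono x) (hxI : ∀ i, x i ∈ Set.Ico (0 : ℝ) (2 * π))
    {c : Fin (2 * n + 2) → ℝ} (hc0 : c ≠ 0) (hc : ∀ q ∈ trigPoly n, ∑ i, c i * q (x i) = 0)
    (i : Fin (2 * n + 2)) : c i ≠ 0 := by
  have step (i : Fin (2 * n + 1)) : (c i.succ = 0) = (c i.castSucc = 0) := by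
    rw [← _root_.sign_eq_zero_iff, sign_succ_of_annihilator hx hxI hc i, SignType.neg_eq_zero_iff,
      _root_.sign_eq_zero_iff]
  obtain ⟨j, hj⟩ := Function.ne_iff.1 hc0
  exact fun hi => hj ((eq_of_forall_succ_eq_castSucc (g := fun i => c i = 0) step i j).mp hi)

end Annihilators

lemma continuous_of_mem_trigPoly {n : ℕ} {q : ℝ → ℝ} (hq : q ∈ trigPoly n) : Continuous q := by
  induction hq using Submodule.span_induction with
  | mem _ h => obtain ⟨k, rfl⟩ := h; exact continuous_trigBasis n k
  | zero => exact continuous_zero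
  | add _ _ _ _ hp hq => exact hp.add hq
  | smul a _ _ hp => exact hp.const_smul a

lemma periodic_of_mem_trigPoly {n : ℕ} {q : ℝ → ℝ} (hq : q ∈ trigPoly n) :
    Function.Periodic q (2 * π) := by
  induction hq using Submodule.span_induction with
  | mem _ h => obtain ⟨k, rfl⟩ := h; exact periodic_trigBasis n k
  | zero => exact fun _ => rfl
  | add _ _ _ _ hp hq => exact hp.add hq
  | smul a _ _ hp => exact hp.smul a

lemma sum_mul_eq_zero_of_mem_trigPoly {ι : Type*} [Fintype ι] {n : ℕ} {x c : ι → ℝ}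
    (h : ∀ k, ∑ i, c i * trigBasis n k (x i) = 0) {q : ℝ → ℝ} (hq : q ∈ trigPoly n) :
    ∑ i, c i * q (x i) = 0 := by
  induction hq using Submodule.span_induction with
  | mem _ hk => obtain ⟨k, rfl⟩ := hk; exact h k
  | zero => simp
  | add p q _ _ hp hq => simp [mul_add, Finset.sum_add_distrib, hp, hq]
  | smul a p _ hp => simp [mul_left_comm, ← Finset.mul_sum, hp]

lemma exists_ne_zero_annihilator {ι : Type*} [Fintype ι] {n : ℕ}
    (hι : 2 * n + 1 < Fintype.card ι) (x : ι → ℝ) :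
    ∃ c : ι → ℝ, c ≠ 0 ∧ ∀ q ∈ trigPoly n, ∑ i, c i * q (x i) = 0 := by
  have dependent : ¬ LinearIndependent ℝ fun i k => trigBasis n k (x i) := by
    intro h
    have := h.fintype_card_le_finrank
    simp only [Module.finrank_fintype_fun_eq_card, Fintype.card_sum, Fintype.card_fin] at this
    omega
  obtain ⟨c, hc, i, hi⟩ := Fintype.not_linearIndependent_iff.1 dependent
  refine ⟨c, Function.ne_iff.2 ⟨i, hi⟩, fun q => sum_mul_eq_zero_of_mem_trigPoly fun k => ?_⟩
  simpa using congrFun hc k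

/-- The function `e` takes the values `±‖e‖_∞` with alternating signs at `m + 1` increasing points
of `[0, 2π)`; here `m` counts the alternations rather than the points. -/
def Equioscillates (e : ℝ → ℝ) (m : ℕ) : Prop :=
  ∃ x : Fin (m + 1) → ℝ, StrictMono x ∧ (∀ i, x i ∈ Set.Ico (0 : ℝ) (2 * π)) ∧
    (∀ i, |e (x i)| = supNormOn e) ∧ ∀ i : Fin m, e (x i.succ) = -e (x i.castSucc)

lemma supNormOn_eq_norm_restrict {g : ℝ → ℝ} (hg : Continuous g) :
    supNormOn g = ‖(⟨g, hg⟩ : C(ℝ, ℝ)).restrict (Set.Icc 0 (2 * π))‖ := by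
  rw [ContinuousMap.norm_eq_iSup_norm]
  rfl

lemma abs_le_supNormOn {g : ℝ → ℝ} (hg : Continuous g) {t : ℝ} (ht : t ∈ Set.Icc 0 (2 * π)) :
    |g t| ≤ supNormOn g := by
  rw [supNormOn_eq_norm_restrict hg]
  exact ((⟨g, hg⟩ : C(ℝ, ℝ)).restrict (Set.Icc 0 (2 * π))).norm_coe_le_norm ⟨t, ht⟩

theorem Equioscillates.supNormOn_le_supNormOn_sub {n : ℕ} {e q : ℝ → ℝ} (he : Continuous e)
    (h : Equioscillates e (2 * n + 1)) (hq : q ∈ trigPoly n) :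
    supNormOn e ≤ supNormOn (e - q) := by
  obtain ⟨x, hx, hxI, hnorm, halt⟩ := h
  obtain ⟨c, hc0, hc⟩ := exists_ne_zero_annihilator (n := n) (by simp) x
  have sign_mul_const (i) : (SignType.sign (c i) : ℝ) * e (x i) = SignType.sign (c 0) * e (x 0) :=
    eq_of_forall_succ_eq_castSucc (g := fun i => (SignType.sign (c i) : ℝ) * e (x i))
      (fun i => by rw [sign_succ_of_annihilator hx hxI hc i, halt]; push_cast; ring) i 0
  have abs_sum : |∑ i, c i * e (x i)| = (∑ i, |c i|) * supNormOn e := by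
    calc |∑ i, c i * e (x i)| = |(∑ i, |c i|) * (SignType.sign (c 0) * e (x 0))| := by
          rw [Finset.sum_mul]
          congr! 2 with i
          rw [← sign_mul_const i, ← mul_assoc, abs_mul_sign]
      _ = (∑ i, |c i|) * supNormOn e := by
          rw [abs_mul, abs_mul, hnorm, abs_of_nonneg (Finset.sum_nonneg fun i _ => abs_nonneg _)]
          rcases (ne_zero_of_annihilator hx hxI hc0 hc 0).lt_or_gt with h | h <;> simp [h]
  have hq' := continuous_of_mem_trigPoly hq
  rw [supNormOn_eq_norm_restrict he, supNormOn_eq_norm_restrict (he.sub hq')]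
  rw [supNormOn_eq_norm_restrict he] at abs_sum
  exact norm_le_norm_sub_of_annihilator (e := (⟨e, he⟩ : C(ℝ, ℝ)).restrict _)
    (q := (⟨q, hq'⟩ : C(ℝ, ℝ)).restrict _)
    (x := fun i => ⟨x i, Set.Ico_subset_Icc_self (hxI i)⟩) hc0 (hc q hq) abs_sum

lemma zero_mem_convexHull_Ico_of_forall_supNormOn_le {n : ℕ} {e : ℝ → ℝ} (he : Continuous e)
    (hper : Function.Periodic e (2 * π))
    (h : ∀ q ∈ trigPoly n, supNormOn e ≤ supNormOn (e - q)) :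
    (0 : Fin (n + 1) ⊕ Fin n → ℝ) ∈ convexHull ℝ ((fun t k => e t * trigBasis n k t) ''
      {t ∈ Set.Ico 0 (2 * π) | |e t| = supNormOn e}) := by
  have : Nonempty (Set.Icc 0 (2 * π)) := ⟨⟨0, Set.left_mem_Icc.2 two_pi_pos.le⟩⟩
  have on_Icc := zero_mem_convexHull_of_forall_norm_le
    (e := (⟨e, he⟩ : C(ℝ, ℝ)).restrict (Set.Icc 0 (2 * π)))
    (φ := fun k => (⟨trigBasis n k, continuous_trigBasis n k⟩ : C(ℝ, ℝ)).restrict _) fun a => by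
      have hq : ∑ k, a k • trigBasis n k ∈ trigPoly n :=
        Submodule.sum_smul_mem _ _ fun k _ => Submodule.subset_span ⟨k, rfl⟩
      have := h _ hq
      rw [supNormOn_eq_norm_restrict he,
        supNormOn_eq_norm_restrict (he.sub (continuous_of_mem_trigPoly hq))] at this
      convert this using 2
      ext t
      simp
  rw [← supNormOn_eq_norm_restrict he] at on_Icc
  refine convexHull_mono ?_ on_Icc
  have hper_pair : Function.Periodic (fun t => (e t, fun k => e t * trigBasis n k t)) (2 * π) :=
    fun t => by simp only [hper t, periodic_trigBasis n _ t]
  rintro _ ⟨⟨t, _⟩, ht, rfl⟩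
  obtain ⟨s, hs, hts⟩ := hper_pair.exists_mem_Ico₀ two_pi_pos t
  obtain ⟨hes, hbs⟩ := Prod.mk.injEq .. |>.mp hts
  refine ⟨s, ⟨hs, ?_⟩, hbs.symm⟩
  rw [← hes]
  exact ht

theorem equioscillates_of_forall_supNormOn_le {n : ℕ} {e : ℝ → ℝ} (he : Continuous e)
    (hper : Function.Periodic e (2 * π))
    (h : ∀ q ∈ trigPoly n, supNormOn e ≤ supNormOn (e - q)) : Equioscillates e (2 * n + 1) := by
  obtain ⟨x, w, hxI, hw0, hw1, hws, hwe⟩ := exists_orderEmbedding_fin_of_mem_convexHull_image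
    (m := 2 * n + 2) (Set.Ico_infinite two_pi_pos) (Set.sep_subset _ _)
    (by simp only [Module.finrank_fintype_fun_eq_card, Fintype.card_sum, Fintype.card_fin]; omega)
    (zero_mem_convexHull_Ico_of_forall_supNormOn_le he hper h)
  have annihilator : ∀ q ∈ trigPoly n, ∑ i, w i * e (x i) * q (x i) = 0 := fun q =>
    sum_mul_eq_zero_of_mem_trigPoly fun k => by simpa [mul_assoc] using congrFun hwe k
  obtain ⟨i₀, hi₀⟩ : ∃ i, w i ≠ 0 := by
    by_contra! hw
    simp [hw] at hw1
  rcases eq_or_ne (supNormOn e) 0 with hE | hE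
  · have vanishes (i) : e (x i) = 0 :=
      abs_nonpos_iff.1 ((abs_le_supNormOn he (Set.Ico_subset_Icc_self (hxI i))).trans_eq hE)
    exact ⟨x, x.strictMono, hxI, fun i => by rw [vanishes, abs_zero, hE],
      fun i => by rw [vanishes, vanishes, neg_zero]⟩
  have ne_zero (i) : w i * e (x i) ≠ 0 := by
    refine ne_zero_of_annihilator x.strictMono hxI (Function.ne_iff.2 ⟨i₀, ?_⟩) annihilator i
    exact mul_ne_zero hi₀ (abs_ne_zero.1 ((hws i₀ hi₀).2.trans_ne hE))
  have extremal (i) : |e (x i)| = supNormOn e := (hws i (left_ne_zero_of_mul (ne_zero i))).2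
  have sign_weighted (i) : SignType.sign (w i * e (x i)) = SignType.sign (e (x i)) := by
    rw [sign_mul, sign_pos ((hw0 i).lt_of_ne' (left_ne_zero_of_mul (ne_zero i))), one_mul]
  refine ⟨x, x.strictMono, hxI, extremal, fun i => ?_⟩
  have sign_succ := sign_succ_of_annihilator x.strictMono hxI annihilator i
  rw [sign_weighted, sign_weighted] at sign_succ
  rw [← sign_mul_abs (e (x i.succ)), ← sign_mul_abs (e (x i.castSucc)), sign_succ, extremal,
    extremal]
  push_cast
  ring

/-- Equioscillation characterization of the best supremum-norm approximant to a real
continuous `2π`-periodic function `f` from the real trigonometric polynomials of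
degree at most `n`: `p` is a best approximant if and only if the error `f - p`
attains `±‖f - p‖_∞` with alternating signs at (at least) `2n+2` increasing points
of `[0, 2π)`. -/
theorem best_trig_approx_iff_equioscillation
    (f : ℝ → ℝ) (hcont : Continuous f)
    (hper : ∀ t : ℝ, f (t + 2 * π) = f t) (n : ℕ)
    (p : ℝ → ℝ) (hp : IsRealTrigPoly n p) :
    (∀ q : ℝ → ℝ, IsRealTrigPoly n q →
        supNormOn (fun t => f t - p t) ≤ supNormOn (fun t => f t - q t)) ↔
      ∃ x : Fin (2 * n + 2) → ℝ, StrictMono x ∧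
        (∀ i, x i ∈ Set.Ico (0 : ℝ) (2 * π)) ∧
        (∀ i, |f (x i) - p (x i)| = supNormOn (fun t => f t - p t)) ∧
        ∀ i : Fin (2 * n + 1),
          f (x i.succ) - p (x i.succ) = -(f (x i.castSucc) - p (x i.castSucc)) := by
  have hp := isRealTrigPoly_iff_mem_trigPoly.1 hp
  have he : Continuous (f - p) := hcont.sub (continuous_of_mem_trigPoly hp)
  have hper : Function.Periodic (f - p) (2 * π) :=
    Function.Periodic.sub hper (periodic_of_mem_trigPoly hp)
  have error_sub (q : ℝ → ℝ) : f - p - (q - p) = fun t => f t - q t :=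
    sub_sub_sub_cancel_right f q p
  constructor
  · refine fun h => equioscillates_of_forall_supNormOn_le he hper fun q hq => ?_
    have := h (q + p) (isRealTrigPoly_iff_mem_trigPoly.2 ((trigPoly n).add_mem hq hp))
    rwa [← error_sub (q + p), add_sub_cancel_right] at this
  · intro (h : Equioscillates (f - p) (2 * n + 1)) q hq
    rw [← error_sub q]
    exact h.supNormOn_le_supNormOn_sub he
      ((trigPoly n).sub_mem (isRealTrigPoly_iff_mem_trigPoly.1 hq) hp)
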